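/- arXiv:math/0703203 — 2 statements merged into one kernel-verified Lean document; each statement's English description precedes it below -/
import Mathlib

section
/- For every integer m ≥ 1: Σ_{i=1}^{2m−1} (−1)^i · C(2m, i−1) · C(2m, i) · C(2m, i+1) = 2·(−1)^m · C(2m, m−1) · C(3m, m−1); and for every odd integer n ≥ 1: Σ_{i=1}^{n−1} (−1)^i · C(n, i−1) · C(n, i) · C(n, i+1) = 0. Here C(a,b) denotes the binomial coefficient and the sums are taken in ℤ. -/
/-!
Exchanging `i` and `n - i` settles odd `n`. For `n = 2m` the product
`C(n, i-1) C(n, i) C(n, i+1)` is `n!³ / ((a+k)! (a-k)! (b+k)! (b-k)! (c+k)! (c-k)!)` with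
`(a, b, c) = (m-1, m, m+1)` and `k = i - m`, so that its alternating sum is an instance of Dixon's
theorem. That theorem is proved by the Wilf–Zeilberger method: with `1 / j! = 0` for `j < 0`, the
sum over all integers `k` satisfies a first-order recurrence in `a`, because the corresponding
combination of summands telescopes.
-/

open Finset Nat

lemma finsum_sub_comp_add_right {G M : Type*} [AddGroup G] [AddCommGroup M] {f : G → M}
    (hf : f.HasFiniteSupport) (g : G) : ∑ᶠ x, (f x - f (x + g)) = 0 := by
  have hshift : (fun x ↦ f (x + g)).HasFiniteSupport :=
    Set.Finite.preimage (add_left_injective g).injOn hf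
  have hsum : ∑ᶠ x, f (x + g) = ∑ᶠ x, f x := finsum_comp_equiv (Equiv.addRight g)
  rw [finsum_sub_distrib hf hshift, hsum, sub_self]

lemma finsum_int_eq_sum_antidiagonal {M : Type*} [AddCommMonoid M] {f : ℤ → M} {a : ℕ}
    (hf : f.support ⊆ Set.Icc (-a) a) :
    ∑ᶠ k, f k = ∑ x ∈ antidiagonal (2 * a), f (x.1 - a) := by
  rw [finsum_eq_sum_of_support_subset f (s := Icc (-a : ℤ) a) (by simpa using hf)]
  refine sum_nbij' (fun k ↦ ((a + k).toNat, (a - k).toNat)) (fun x ↦ (x.1 : ℤ) - a)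
    ?_ ?_ ?_ ?_ ?_
  all_goals simp only [mem_Icc, HasAntidiagonal.mem_antidiagonal, Prod.forall, Prod.mk.injEq]
  case refine_5 =>
    intro k hk
    congr 1
    grind
  all_goals grind

lemma sum_antidiagonal_neg_one_pow_mul_eq_zero {R : Type*} [Ring R] {n : ℕ} (hn : Odd n)
    {f : ℕ × ℕ → R} (hf : ∀ x ∈ antidiagonal n, f x.swap = f x) :
    ∑ x ∈ antidiagonal n, (-1) ^ x.1 * f x = 0 := by
  refine sum_involution (fun x _ ↦ x.swap) (fun x hx ↦ ?_) (fun x hx _ hfix ↦ ?_)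
    (fun x hx ↦ HasAntidiagonal.swap_mem_antidiagonal.2 hx) fun x _ ↦ x.swap_swap
  · have hodd : Odd (x.1 + x.2) := by rwa [HasAntidiagonal.mem_antidiagonal.1 hx]
    rw [hf x hx, Prod.fst_swap]
    rcases Nat.even_or_odd x.1 with h | h
    · rw [h.neg_one_pow, (Nat.odd_add'.1 hodd |>.2 h).neg_one_pow]
      simp
    · rw [h.neg_one_pow, (Nat.odd_add.1 hodd |>.1 h).neg_one_pow]
      simp
  · have hsum := HasAntidiagonal.mem_antidiagonal.1 hx
    have heq : x.2 = x.1 := congrArg Prod.fst hfix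
    grind

lemma cast_choose_of_eq_add (K : Type*) [DivisionSemiring K] [CharZero K] {n k l : ℕ}
    (h : n = k + l) : (n.choose k : K) = n ! / (k ! * l !) := by
  rw [h, Nat.cast_add_choose]

/-- The reciprocal factorial `1 / j!` of an integer, with the value `0` (that of `1 / Γ(j + 1)`)
at negative `j`. -/
def recipFactorial : ℤ → ℚ
  | .ofNat n => (n ! : ℚ)⁻¹
  | .negSucc _ => 0

lemma recipFactorial_natCast (n : ℕ) : recipFactorial n = (n ! : ℚ)⁻¹ := rfl

lemma recipFactorial_of_neg : ∀ {j : ℤ}, j < 0 → recipFactorial j = 0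
  | .negSucc _, _ => rfl

lemma recipFactorial_sub_one (j : ℤ) : recipFactorial (j - 1) = j * recipFactorial j := by
  rcases lt_trichotomy j 0 with hj | rfl | hj
  · rw [recipFactorial_of_neg hj, recipFactorial_of_neg (by lia), mul_zero]
  · simp [recipFactorial_of_neg]
  · obtain ⟨n, rfl⟩ : ∃ n : ℕ, j = (n + 1 : ℕ) := ⟨(j - 1).toNat, by lia⟩
    rw [show ((n + 1 : ℕ) : ℤ) - 1 = n by simp, recipFactorial_natCast, recipFactorial_natCast,
      Nat.factorial_succ]
    push_cast
    field_simp

/-- The summand of Dixon's sum, up to its sign and the factor `(a+b)! (b+c)! (c+a)!` that turns it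
into `C(a+b, a+k) C(b+c, b+k) C(c+a, c+k)`. -/
def dixonTerm (a b c k : ℤ) : ℚ :=
  recipFactorial (a + k) * recipFactorial (a - k) * recipFactorial (b + k) *
    recipFactorial (b - k) * recipFactorial (c + k) * recipFactorial (c - k)

/-- The companion of `dixonTerm` in its Wilf–Zeilberger pair, up to the sign `(-1)^k`. -/
def dixonCertificate (a b c k : ℤ) : ℚ :=
  1 / 2 * (recipFactorial (a + k) * recipFactorial (a + 1 - k) * recipFactorial (b + k - 1) *
    recipFactorial (b - k) * recipFactorial (c + k - 1) * recipFactorial (c - k))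

/-- Dixon's alternating sum in reciprocal factorials. For every integer `a` it has only finitely
many nonzero terms. -/
noncomputable def dixonSum (a b c : ℤ) : ℚ :=
  ∑ᶠ k : ℤ, (-1 : ℚ) ^ k * dixonTerm a b c k

lemma dixonTerm_recurrence (a b c k : ℤ) :
    ((a : ℚ) + 1) * (a + b + 1) * (a + c + 1) * dixonTerm (a + 1) b c k -
        (a + b + c + 1) * dixonTerm a b c k =
      dixonCertificate a b c k + dixonCertificate a b c (k + 1) := by
  have ha : recipFactorial (a + k) = (a + 1 + k) * recipFactorial (a + 1 + k) := by
    simpa [show a + 1 + k - 1 = a + k by ring] using recipFactorial_sub_one (a + 1 + k)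
  have ha' : recipFactorial (a - k) = (a + 1 - k) * recipFactorial (a + 1 - k) := by
    simpa [show a + 1 - k - 1 = a - k by ring] using recipFactorial_sub_one (a + 1 - k)
  simp only [dixonTerm, dixonCertificate, show a + (k + 1) = a + 1 + k by ring,
    show a + 1 - (k + 1) = a - k by ring, ← add_assoc, ← sub_sub, add_sub_cancel_right,
    recipFactorial_sub_one, ha, ha']
  push_cast
  ring

lemma support_dixonTerm_subset (a b c : ℤ) :
    Function.support (dixonTerm a b c) ⊆ Set.Icc (-a) a := by
  intro k hk
  by_contra hmem
  refine hk ?_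
  rcases lt_or_ge (a + k) 0 with hlt | hge
  · simp [dixonTerm, recipFactorial_of_neg hlt]
  · have hlt : a - k < 0 := by grind
    simp [dixonTerm, recipFactorial_of_neg hlt]

lemma support_dixonCertificate_subset (a b c : ℤ) :
    Function.support (dixonCertificate a b c) ⊆ Set.Icc (-a) (a + 1) := by
  intro k hk
  by_contra hmem
  refine hk ?_
  rcases lt_or_ge (a + k) 0 with hlt | hge
  · simp [dixonCertificate, recipFactorial_of_neg hlt]
  · have hlt : a + 1 - k < 0 := by grind
    simp [dixonCertificate, recipFactorial_of_neg hlt]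

lemma dixonSum_recurrence (a b c : ℤ) :
    ((a : ℚ) + 1) * (a + b + 1) * (a + c + 1) * dixonSum (a + 1) b c =
      (a + b + c + 1) * dixonSum a b c := by
  have hterm (a : ℤ) (r : ℚ) :
      (fun k : ℤ ↦ r * ((-1) ^ k * dixonTerm a b c k)).HasFiniteSupport :=
    (Set.finite_Icc _ _).subset fun k hk ↦
      support_dixonTerm_subset a b c (right_ne_zero_of_mul (right_ne_zero_of_mul hk))
  have hcert : (fun k : ℤ ↦ (-1) ^ k * dixonCertificate a b c k).HasFiniteSupport :=
    (Set.finite_Icc _ _).subset fun k hk ↦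
      support_dixonCertificate_subset a b c (right_ne_zero_of_mul hk)
  rw [← sub_eq_zero, dixonSum, dixonSum, mul_finsum, mul_finsum,
    ← finsum_sub_distrib (hterm _ _) (hterm _ _), ← finsum_sub_comp_add_right hcert 1]
  refine finsum_congr fun k ↦ ?_
  rw [zpow_add_one₀ (by norm_num)]
  linear_combination (-1 : ℚ) ^ k * dixonTerm_recurrence a b c k

lemma dixonSum_zero (b c : ℕ) : dixonSum 0 b c = ((b ! : ℚ) ^ 2 * (c ! : ℚ) ^ 2)⁻¹ := by
  rw [dixonSum, finsum_eq_single _ 0 fun k hk ↦ ?_]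
  · have hzero : recipFactorial 0 = 1 := by simpa using recipFactorial_natCast 0
    simp only [dixonTerm, add_zero, sub_zero, zpow_zero, hzero, recipFactorial_natCast]
    ring
  · by_contra hne
    exact hk (by simpa using support_dixonTerm_subset 0 b c (right_ne_zero_of_mul hne))

theorem dixonSum_natCast (a b c : ℕ) :
    dixonSum a b c =
      ((a + b + c)! : ℚ) / (a ! * b ! * c ! * (a + b)! * (a + c)! * (b + c)!) := by
  induction a with
  | zero =>
    rw [Nat.cast_zero, dixonSum_zero]
    simp only [zero_add, Nat.factorial_zero, Nat.cast_one]
    field_simp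
  | succ a ih =>
    have hrec := dixonSum_recurrence a b c
    rw [ih] at hrec
    have hne : ((a : ℚ) + 1) * (a + b + 1) * (a + c + 1) ≠ 0 := by positivity
    push_cast at hrec ⊢
    refine mul_left_cancel₀ hne (hrec.trans ?_)
    rw [show a + 1 + b + c = a + b + c + 1 by ring, show a + 1 + b = a + b + 1 by ring,
      show a + 1 + c = a + c + 1 by ring]
    simp only [Nat.factorial_succ]
    push_cast
    field_simp

/-- The alternating sum of `C(N, i) C(N, i + p) C(N, i + 2p)`, where `N = n + 2p`. It runs over
`i + j = n`, which makes its symmetry under `i ↔ j` visible. -/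
def altTripleChooseSum (p n : ℕ) : ℤ :=
  ∑ x ∈ antidiagonal n, (-1) ^ x.1 *
    ((n + 2 * p).choose x.1 * (n + 2 * p).choose (x.1 + p) * (n + 2 * p).choose (x.1 + 2 * p))

lemma altTripleChooseSum_of_odd (p : ℕ) {n : ℕ} (hn : Odd n) : altTripleChooseSum p n = 0 := by
  refine sum_antidiagonal_neg_one_pow_mul_eq_zero hn fun x hx ↦ ?_
  have hsum := HasAntidiagonal.mem_antidiagonal.1 hx
  have houter : (n + 2 * p).choose x.2 = (n + 2 * p).choose (x.1 + 2 * p) :=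
    Nat.choose_symm_of_eq_add (by lia)
  have hmiddle : (n + 2 * p).choose (x.2 + p) = (n + 2 * p).choose (x.1 + p) :=
    Nat.choose_symm_of_eq_add (by lia)
  have houter' : (n + 2 * p).choose (x.2 + 2 * p) = (n + 2 * p).choose x.1 :=
    Nat.choose_symm_of_eq_add (by lia)
  rw [Prod.fst_swap, houter, hmiddle, houter']
  ring

lemma triple_choose_eq_dixonTerm (p : ℕ) {a i j : ℕ} (hij : i + j = 2 * a) :
    ((2 * a + 2 * p).choose i * (2 * a + 2 * p).choose (i + p) *
        (2 * a + 2 * p).choose (i + 2 * p) : ℚ) =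
      ((2 * a + 2 * p)! : ℚ) ^ 3 *
        dixonTerm a (a + p : ℕ) (a + 2 * p : ℕ) (i - a) := by
  have hplus (r : ℕ) : ((a + r : ℕ) : ℤ) + (i - a) = (i + r : ℕ) := by lia
  have hminus (r : ℕ) : ((a + r : ℕ) : ℤ) - (i - a) = (j + r : ℕ) := by lia
  have hplus₀ := hplus 0
  have hminus₀ := hminus 0
  simp only [add_zero] at hplus₀ hminus₀
  simp only [dixonTerm, hplus, hminus, hplus₀, hminus₀, recipFactorial_natCast]
  rw [cast_choose_of_eq_add ℚ (show 2 * a + 2 * p = i + (j + 2 * p) by lia),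
    cast_choose_of_eq_add ℚ (show 2 * a + 2 * p = i + p + (j + p) by lia),
    cast_choose_of_eq_add ℚ (show 2 * a + 2 * p = i + 2 * p + j by lia)]
  field_simp

lemma altTripleChooseSum_two_mul (p a : ℕ) :
    (altTripleChooseSum p (2 * a) : ℚ) =
      (-1) ^ a * ((2 * a + 2 * p)! : ℚ) ^ 3 * dixonSum a (a + p : ℕ) (a + 2 * p : ℕ) := by
  have hsupp : (Function.support fun k : ℤ ↦
      (-1 : ℚ) ^ k * dixonTerm a (a + p : ℕ) (a + 2 * p : ℕ) k) ⊆ Set.Icc (-a) a :=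
    (Function.support_mul_subset_right _ _).trans (support_dixonTerm_subset _ _ _)
  rw [dixonSum, finsum_int_eq_sum_antidiagonal hsupp, altTripleChooseSum, mul_sum]
  push_cast
  refine sum_congr rfl fun x hx ↦ ?_
  have hsign : (-1 : ℚ) ^ x.1 = (-1) ^ a * (-1) ^ ((x.1 : ℤ) - a) := by
    rw [← zpow_natCast, ← zpow_natCast, ← zpow_add₀ (by norm_num), add_sub_cancel]
  have hterm := triple_choose_eq_dixonTerm p (HasAntidiagonal.mem_antidiagonal.1 hx)
  push_cast at hterm
  rw [hterm, hsign]
  ring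

/-- At `p = 0` this is Dixon's original evaluation of `∑ (-1)^i C(2a, i)³`. -/
theorem choose_mul_altTripleChooseSum_two_mul (p a : ℕ) :
    (a + p).choose a * altTripleChooseSum p (2 * a) =
      (-1) ^ a * (2 * (a + p)).choose p * (2 * (a + p)).choose a * (3 * (a + p)).choose a := by
  suffices h : ((a + p).choose a * altTripleChooseSum p (2 * a) : ℚ) =
      (-1) ^ a * (2 * (a + p)).choose p * (2 * (a + p)).choose a * (3 * (a + p)).choose a by
    exact_mod_cast h
  rw [altTripleChooseSum_two_mul, dixonSum_natCast,
    cast_choose_of_eq_add ℚ (show a + p = a + p from rfl),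
    cast_choose_of_eq_add ℚ (show 2 * (a + p) = p + (2 * a + p) by ring),
    cast_choose_of_eq_add ℚ (show 2 * (a + p) = a + (a + 2 * p) by ring),
    cast_choose_of_eq_add ℚ (show 3 * (a + p) = a + (2 * a + 3 * p) by ring),
    show a + (a + p) + (a + 2 * p) = 3 * (a + p) by ring, show a + (a + p) = 2 * a + p by ring,
    show a + (a + 2 * p) = 2 * (a + p) by ring, show a + p + (a + 2 * p) = 2 * a + 3 * p by ring,
    ← mul_add]
  field_simp

lemma altTripleChooseSum_one_two_mul (a : ℕ) :
    altTripleChooseSum 1 (2 * a) =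
      2 * (-1) ^ a * (2 * (a + 1)).choose a * (3 * (a + 1)).choose a := by
  have h := choose_mul_altTripleChooseSum_two_mul 1 a
  rw [Nat.choose_succ_self_right, Nat.choose_one_right] at h
  have hne : ((a + 1 : ℕ) : ℤ) ≠ 0 := by positivity
  refine mul_left_cancel₀ hne (h.trans ?_)
  push_cast
  ring

lemma sum_Icc_neg_one_pow_mul_choose (n : ℕ) :
    ∑ i ∈ Icc 1 (n + 1),
        (-1 : ℤ) ^ i * (n + 2).choose (i - 1) * (n + 2).choose i * (n + 2).choose (i + 1) =
      -altTripleChooseSum 1 n := by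
  rw [altTripleChooseSum, Finset.Nat.sum_antidiagonal_eq_sum_range_succ_mk, ← sum_neg_distrib,
    range_eq_Ico, ← Ico_add_one_right_eq_Icc, ← sum_Ico_add' _ 0 (n + 1) 1]
  refine sum_congr rfl fun i _ ↦ ?_
  rw [add_tsub_cancel_right, pow_succ]
  ring

theorem dixon_style_identity :
    (∀ m : ℕ, 1 ≤ m →
      ∑ i ∈ Finset.Icc 1 (2 * m - 1),
        (-1 : ℤ) ^ i * (2 * m).choose (i - 1) * (2 * m).choose i * (2 * m).choose (i + 1) =
      2 * (-1 : ℤ) ^ m * (2 * m).choose (m - 1) * (3 * m).choose (m - 1)) ∧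
    (∀ n : ℕ, 1 ≤ n → Odd n →
      ∑ i ∈ Finset.Icc 1 (n - 1),
        (-1 : ℤ) ^ i * n.choose (i - 1) * n.choose i * n.choose (i + 1) = 0) := by
  refine ⟨fun m hm ↦ ?_, fun n hn hodd ↦ ?_⟩
  · obtain ⟨a, rfl⟩ := Nat.exists_eq_add_of_le' hm
    have hsum := sum_Icc_neg_one_pow_mul_choose (2 * a)
    rw [altTripleChooseSum_one_two_mul] at hsum
    refine hsum.trans ?_
    rw [pow_succ, add_tsub_cancel_right]
    ring
  · obtain rfl | hn' := hn.eq_or_lt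
    · rfl
    · obtain ⟨l, rfl⟩ := Nat.exists_eq_add_of_le' hn'
      have hl : Odd l := (Nat.odd_add.1 hodd).2 even_two
      have hsum := sum_Icc_neg_one_pow_mul_choose l
      rwa [altTripleChooseSum_of_odd 1 hl, neg_zero] at hsum
end

section
/- For every integer k ≥ 0 and every odd positive integer n: Σ_{i=k}^{n−k} (−1)^i · C(n, i−k) · C(n, i) · C(n, i+k) = 0, where C(a,b) denotes the binomial coefficient (equal to 0 when b > a) and the sum is taken in ℤ (and is empty if k > n−k). -/
/-!
The reflection `i ↦ n - i` swaps the two outer binomial coefficients and fixes the middle one.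
As `n` is odd, it changes the sign `(-1) ^ i` and has no fixed point, so the terms cancel in pairs.
-/

theorem sum_eq_zero_of_add_reflect_eq_zero {M : Type*} [AddCommMonoid M] {n : ℕ} (hn : Odd n)
    {s : Finset ℕ} {f : ℕ → M} (hle : ∀ i ∈ s, i ≤ n) (hs : ∀ i ∈ s, n - i ∈ s)
    (hf : ∀ i ∈ s, f i + f (n - i) = 0) : ∑ i ∈ s, f i = 0 := by
  have reflect_ne (i : ℕ) (hi : i ∈ s) : n - i ≠ i := by
    have := hle i hi
    grind
  exact Finset.sum_involution (fun i _ ↦ n - i) hf (fun i hi _ ↦ reflect_ne i hi) hs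
    fun i hi ↦ Nat.sub_sub_self (hle i hi)

theorem neg_one_pow_eq_neg_of_odd_add {R : Type*} [Monoid R] [HasDistribNeg R] {i j : ℕ}
    (h : Odd (i + j)) : (-1 : R) ^ i = -(-1) ^ j := by
  calc (-1 : R) ^ i = (-1) ^ (j + 1) := neg_one_pow_congr (by grind)
    _ = -(-1) ^ j := by rw [pow_succ, mul_neg_one]

theorem choose_sub_mul_choose_mul_choose_add_symm {i j k : ℕ} (hi : k ≤ i) (hj : k ≤ j) :
    (i + j).choose (i - k) * (i + j).choose i * (i + j).choose (i + k) =
      (i + j).choose (j - k) * (i + j).choose j * (i + j).choose (j + k) := by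
  have lower : (i + j).choose (i - k) = (i + j).choose (j + k) :=
    Nat.choose_symm_of_eq_add (by lia)
  have upper : (i + j).choose (i + k) = (i + j).choose (j - k) :=
    Nat.choose_symm_of_eq_add (by lia)
  rw [lower, Nat.choose_symm_add, upper]
  ring

theorem odd_sum_vanishes (k n : ℕ) (hn : 1 ≤ n) (hodd : Odd n) :
    ∑ i ∈ Finset.Icc k (n - k),
      (-1 : ℤ) ^ i * n.choose (i - k) * n.choose i * n.choose (i + k) = 0 := by
  refine sum_eq_zero_of_add_reflect_eq_zero hodd (by grind) (by grind) fun i hi ↦ ?_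
  obtain ⟨j, rfl⟩ : ∃ j, n = i + j := Nat.exists_eq_add_of_le (by grind)
  obtain ⟨hki, hkj⟩ : k ≤ i ∧ k ≤ j := by grind
  have sign : (-1 : ℤ) ^ i = -(-1) ^ j := neg_one_pow_eq_neg_of_odd_add hodd
  have binom := congrArg (Nat.cast : ℕ → ℤ) (choose_sub_mul_choose_mul_choose_add_symm hki hkj)
  push_cast at binom
  rw [Nat.add_sub_cancel_left, sign]
  linear_combination -(-1) ^ j * binom
end
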